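/- For every z₁ = (b₁,w₁,v₁,M₁) ∈ K and z₂ = (b₂,w₂,v₂,M₂) ∈ K, the difference (b₁−b₂, w₁−w₂, v₁−v₂, M₁−M₂, 0) belongs to the wave cone Λ; that is, there exists ξ ∈ ℝ³∖{0} with V((b₁−b₂, w₁−w₂, v₁−v₂, M₁−M₂, 0)) ξ = 0. -/

import Mathlib

/-!
Choose `η ∈ ℝ²` nonzero with `η ⬝ v₁ = η ⬝ v₂ =: s`, and take `ξ = (η, -s)`. Since
`M₁ - M₂ = v₁ ⊗ v₁ - v₂ ⊗ v₂`, the first two rows give `s v₁ - s v₂ - s (v₁ - v₂) = 0`; the third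
gives `(v₁ - v₂) ⬝ η = 0`; and the fourth, by `wᵢ = bᵢ vᵢ`, gives `s b₁ - s b₂ - s (b₁ - b₂) = 0`.
-/

open Matrix

noncomputable section

/-- The 4×3 matrix `V(z)` associated to a state `z = (b, w, v, M, q)`: first two rows
`(M + q I₂ | v)`, third row `(vᵀ | 0)`, fourth row `(wᵀ | b)`. -/
def VmatM (b : ℝ) (w v : Fin 2 → ℝ) (M : Matrix (Fin 2) (Fin 2) ℝ) (q : ℝ) :
    Matrix (Fin 4) (Fin 3) ℝ :=
  ![![M 0 0 + q, M 0 1, v 0],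
    ![M 1 0, M 1 1 + q, v 1],
    ![v 0, v 1, 0],
    ![w 0, w 1, b]]

/-- The constraint set `K`: states `(b, w, v, M)` with `|b| = 1`, `|v| = 1`,
`M = v ⊗ v − (1/2) I₂` and `w = b v`. -/
def Kset : Set (ℝ × (Fin 2 → ℝ) × (Fin 2 → ℝ) × Matrix (Fin 2) (Fin 2) ℝ) :=
  {z | |z.1| = 1 ∧ (z.2.2.1 0) ^ 2 + (z.2.2.1 1) ^ 2 = 1 ∧
    z.2.2.2 = vecMulVec z.2.2.1 z.2.2.1 - (1 / 2 : ℝ) • (1 : Matrix (Fin 2) (Fin 2) ℝ) ∧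
    z.2.1 = z.1 • z.2.2.1}

/-- For `z₁, z₂ ∈ K`, the difference `(b₁−b₂, w₁−w₂, v₁−v₂, M₁−M₂, 0)`
belongs to the wave cone `Λ`: some `ξ ≠ 0` is annihilated by the associated 4×3 matrix. -/
theorem stmt_5 (z₁ z₂ : ℝ × (Fin 2 → ℝ) × (Fin 2 → ℝ) × Matrix (Fin 2) (Fin 2) ℝ)
    (h₁ : z₁ ∈ Kset) (h₂ : z₂ ∈ Kset) :
    ∃ ξ : Fin 3 → ℝ, ξ ≠ 0 ∧
      VmatM (z₁.1 - z₂.1) (z₁.2.1 - z₂.2.1) (z₁.2.2.1 - z₂.2.2.1)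
        (z₁.2.2.2 - z₂.2.2.2) 0 *ᵥ ξ = 0 := by
  obtain ⟨b, w, v, M⟩ := z₁
  obtain ⟨c, u, x, N⟩ := z₂
  obtain ⟨-, -, hM, hw⟩ := h₁
  obtain ⟨-, -, hN, hu⟩ := h₂
  dsimp only at hM hw hN hu ⊢
  subst hM hw hN hu
  -- A nonzero `(p, r)` orthogonal to `v - x`: its rotation by a right angle, unless `v = x`.
  obtain ⟨p, r, hne, horth⟩ : ∃ p r : ℝ, ¬(p = 0 ∧ r = 0) ∧
      p * (v 0 - x 0) + r * (v 1 - x 1) = 0 := by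
    by_cases h : v 0 - x 0 = 0 ∧ v 1 - x 1 = 0
    · exact ⟨1, 0, by simp, by rw [h.1]; ring⟩
    · exact ⟨v 1 - x 1, -(v 0 - x 0), fun h' => h ⟨neg_eq_zero.mp h'.2, h'.1⟩, by ring⟩
  refine ⟨![p, r, -(p * v 0 + r * v 1)], fun h => hne ⟨?_, ?_⟩, ?_⟩
  · simpa using congrFun h 0
  · simpa using congrFun h 1
  · ext i
    fin_cases i <;>
      simp [VmatM, mulVec, dotProduct, Fin.sum_univ_succ, vecMulVec_apply]
    · linear_combination x 0 * horth
    · linear_combination x 1 * horth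
    · linear_combination horth
    · linear_combination c * horth
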